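/- Spherical decomposition for a finite ensemble: let M ≥ 1, let θ¹,…,θᴹ ∈ Δ_K be probability vectors, and set θ̄ = (1/M) Σ_{m=1}^{M} θᵐ (so θ̄ ≠ 0). Then 1 − ‖θ̄‖₂ = (1/M) Σ_{m=1}^{M} (1 − ‖θᵐ‖₂) + (1/M) Σ_{m=1}^{M} (‖θᵐ‖₂ − ⟨θ̄, θᵐ⟩ / ‖θ̄‖₂), where ‖·‖₂ is the Euclidean norm and ⟨·,·⟩ the Euclidean inner product. -/

import Mathlib

/-!
For a fixed prediction `q`, the entropy `1 - ‖p‖` plus the divergence `‖p‖ - ⟪q, p⟫ / ‖q‖` is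
`1 - ⟪q, p⟫ / ‖q‖`, because the norms of `p` cancel. This is affine in `p`, so averaging it over an
ensemble amounts to evaluating it at the mean, and at `p = q` it is the entropy of `q`.
-/

open scoped RealInnerProductSpace

section InnerProductSpace

variable {E : Type*} [NormedAddCommGroup E] [InnerProductSpace ℝ E]

/-- The generalized entropy of the spherical score: the total uncertainty of an ensemble is its
value at the mean, and the aleatoric uncertainty is its average over the members. -/
noncomputable def sphericalEntropy (p : E) : ℝ := 1 - ‖p‖

/-- The divergence of the spherical score between a prediction `q` and a target `p`: the epistemic
uncertainty of an ensemble is its average over the members `p`, with `q` the mean. Meaningful for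
`q ≠ 0`; division by zero makes it `‖p‖` at `q = 0`. -/
noncomputable def sphericalDivergence (q p : E) : ℝ := ‖p‖ - ⟪q, p⟫ / ‖q‖

theorem sphericalEntropy_add_sphericalDivergence (q p : E) :
    sphericalEntropy p + sphericalDivergence q p = 1 - ⟪q, p⟫ / ‖q‖ :=
  sub_add_sub_cancel _ _ _

theorem sum_mul_one_sub_inner_div_norm {ι : Type*} {s : Finset ι} {w : ι → ℝ}
    (hw : ∑ i ∈ s, w i = 1) (q : E) (θ : ι → E) :
    ∑ i ∈ s, w i * (1 - ⟪q, θ i⟫ / ‖q‖) = 1 - ⟪q, ∑ i ∈ s, w i • θ i⟫ / ‖q‖ := by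
  simp only [mul_sub, mul_one, Finset.sum_sub_distrib, hw, inner_sum, real_inner_smul_right,
    Finset.sum_div, mul_div_assoc]

theorem one_sub_inner_self_div_norm {q : E} (hq : q ≠ 0) :
    1 - ⟪q, q⟫ / ‖q‖ = sphericalEntropy q := by
  rw [real_inner_self_eq_norm_mul_norm, mul_div_cancel_right₀ _ (norm_ne_zero_iff.mpr hq),
    sphericalEntropy]

theorem spherical_decomposition_ensemble_general {ι : Type*} {s : Finset ι} {w : ι → ℝ}
    (hw : ∑ i ∈ s, w i = 1) {θ : ι → E} (hθ : ∑ i ∈ s, w i • θ i ≠ 0) :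
    sphericalEntropy (∑ i ∈ s, w i • θ i)
      = ∑ i ∈ s, w i * sphericalEntropy (θ i)
        + ∑ i ∈ s, w i * sphericalDivergence (∑ j ∈ s, w j • θ j) (θ i) := by
  simp only [← Finset.sum_add_distrib, ← mul_add, sphericalEntropy_add_sphericalDivergence]
  rw [sum_mul_one_sub_inner_div_norm hw, one_sub_inner_self_div_norm hθ]

end InnerProductSpace

section EuclideanSpace

variable {κ : Type*} [Fintype κ]

theorem sphericalEntropy_eq_sqrt (p : EuclideanSpace ℝ κ) :
    sphericalEntropy p = 1 - √(∑ k, p k ^ 2) := by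
  simp only [sphericalEntropy, EuclideanSpace.norm_eq, Real.norm_eq_abs, sq_abs]

theorem sphericalDivergence_eq_sqrt (q p : EuclideanSpace ℝ κ) :
    sphericalDivergence q p
      = √(∑ k, p k ^ 2) - (∑ k, q k * p k) / √(∑ k, q k ^ 2) := by
  simp only [sphericalDivergence, EuclideanSpace.norm_eq, Real.norm_eq_abs, sq_abs,
    PiLp.inner_apply, Real.inner_apply]

theorem sum_smul_ne_zero_of_sum_apply_eq_one {ι : Type*} {s : Finset ι} {w : ι → ℝ}
    (hw : ∑ i ∈ s, w i = 1) {θ : ι → EuclideanSpace ℝ κ} (hθ : ∀ i ∈ s, ∑ k, θ i k = 1) :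
    ∑ i ∈ s, w i • θ i ≠ 0 := by
  intro hzero
  have hsum : ∑ k, (∑ i ∈ s, w i • θ i) k = 1 := calc
    ∑ k, (∑ i ∈ s, w i • θ i) k = ∑ i ∈ s, w i * ∑ k, θ i k := by
      simp only [WithLp.ofLp_sum, WithLp.ofLp_smul, Finset.sum_apply, Pi.smul_apply, smul_eq_mul,
        Finset.mul_sum]
      exact Finset.sum_comm
    _ = ∑ i ∈ s, w i := Finset.sum_congr rfl fun i hi => by rw [hθ i hi, mul_one]
    _ = 1 := hw
  simp [hzero] at hsum

end EuclideanSpace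

/-- **Spherical decomposition for a finite ensemble.**
For an ensemble `θ¹,…,θᴹ ∈ Δ_K` with average `θ̄ = (1/M) Σ_m θᵐ`:
`1 − ‖θ̄‖₂ = (1/M) Σ_m (1 − ‖θᵐ‖₂) + (1/M) Σ_m (‖θᵐ‖₂ − ⟨θ̄, θᵐ⟩ / ‖θ̄‖₂)`,
where `‖x‖₂ = √(Σ_k x_k²)` and `⟨x, y⟩ = Σ_k x_k y_k`. -/
theorem spherical_decomposition_ensemble
    (K M : ℕ) (hM : 1 ≤ M) (θ : Fin M → Fin K → ℝ)
    (h0 : ∀ m k, 0 ≤ θ m k) (h1 : ∀ m, ∑ k, θ m k = 1) :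
    1 - Real.sqrt (∑ k, ((1 / (M : ℝ)) * ∑ m, θ m k) ^ 2)
      = (1 / (M : ℝ)) * ∑ m, (1 - Real.sqrt (∑ k, (θ m k) ^ 2))
        + (1 / (M : ℝ)) * ∑ m,
            (Real.sqrt (∑ k, (θ m k) ^ 2)
              - (∑ k, ((1 / (M : ℝ)) * ∑ m', θ m' k) * θ m k)
                / Real.sqrt (∑ k, ((1 / (M : ℝ)) * ∑ m', θ m' k) ^ 2)) := by
  have hw : ∑ _m : Fin M, 1 / (M : ℝ) = 1 := by
    simp [Nat.one_le_iff_ne_zero.mp hM]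
  have hmean := sum_smul_ne_zero_of_sum_apply_eq_one hw
    (θ := fun m => WithLp.toLp 2 (θ m)) fun m _ => h1 m
  simpa only [sphericalEntropy_eq_sqrt, sphericalDivergence_eq_sqrt, WithLp.ofLp_sum,
    WithLp.ofLp_smul, Finset.sum_apply, Pi.smul_apply, smul_eq_mul, ← Finset.mul_sum]
    using spherical_decomposition_ensemble_general hw hmean
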